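/- Let A be a finite set, N a random subset of A (equivalently, a random vector (c_a)_{a∈A} ∈ {0,1}^A), and let W = (W_a)_{a∈A} be a nonnegative random vector with {W_a > 0} ⊆ {c_a = 1} and E(Σ_a W_a) = 1. Let N_W = #{a : W_a > 0} and Ñ = #{a : c_a = 1}, and define T_W(q) = −log E(Σ_a W_a^q) and T̃(q) = −(q−1) log E(Ñ). If E(Ñ) ≥ 1 then T_W'(1⁻) ≤ T̃'(1) = log E(Ñ); that is, −E(Σ_a W_a log W_a) ≤ log E(Ñ). -/

import Mathlib

open MeasureTheory

/-- If `{W_a > 0} ⊆ {c_a = 1}`, `E(Σ_a W_a) = 1` and `E(Ñ) ≥ 1`, where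
`Ñ = #{a : c_a = 1}`, then `−E(Σ_a W_a log W_a) ≤ log E(Ñ)`. -/
theorem stmt17 {Ω A : Type*} [MeasurableSpace Ω] (μ : Measure Ω)
    [IsProbabilityMeasure μ] [Fintype A] [DecidableEq A]
    (W : Ω → A → ℝ) (c : Ω → A → Bool)
    (hnonneg : ∀ ω a, 0 ≤ W ω a)
    (hsub : ∀ ω a, 0 < W ω a → c ω a = true)
    (hmean : ∫ ω, ∑ a, W ω a ∂μ = 1)
    (hNint : Integrable
      (fun ω => ((Finset.univ.filter fun a => c ω a = true).card : ℝ)) μ)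
    (hWlogint : Integrable (fun ω => ∑ a, W ω a * Real.log (W ω a)) μ)
    (hEN : 1 ≤ ∫ ω, ((Finset.univ.filter fun a => c ω a = true).card : ℝ) ∂μ) :
    -∫ ω, ∑ a, W ω a * Real.log (W ω a) ∂μ
      ≤ Real.log (∫ ω, ((Finset.univ.filter fun a => c ω a = true).card : ℝ) ∂μ) := by
  have hW : Integrable (fun ω => ∑ a, W ω a) μ := by
    by_contra h
    rw [integral_undef h] at hmean
    exact zero_ne_one hmean
  generalize hM : ∫ ω, ((Finset.univ.filter fun a => c ω a = true).card : ℝ) ∂μ = M at *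
  have hM0 : 0 < M := by linarith
  have key : ∀ ω, -∑ a, W ω a * Real.log (W ω a) ≤
      (Real.log M - 1) * (∑ a, W ω a)
        + M⁻¹ * ((Finset.univ.filter fun a => c ω a = true).card : ℝ) := by
    intro ω
    rw [Finset.card_filter, Nat.cast_sum, Finset.mul_sum, Finset.mul_sum,
      ← Finset.sum_add_distrib, ← Finset.sum_neg_distrib]
    apply Finset.sum_le_sum
    intro a _
    rcases (hnonneg ω a).eq_or_lt with h | h
    · rw [← h]
      have : (0 : ℝ) ≤ M⁻¹ := (inv_pos.2 hM0).le
      simp only [zero_mul, neg_zero, mul_zero, zero_add]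
      exact mul_nonneg this (Nat.cast_nonneg _)
    · rw [if_pos (hsub ω a h)]
      have h1 := Real.log_le_sub_one_of_pos (x := (W ω a * M)⁻¹) (inv_pos.2 (mul_pos h hM0))
      rw [Real.log_inv, Real.log_mul h.ne' hM0.ne'] at h1
      have h2 := mul_le_mul_of_nonneg_left h1 h.le
      have h3 : W ω a * ((W ω a * M)⁻¹ - 1) = M⁻¹ - W ω a := by
        field_simp
      rw [h3] at h2
      push_cast
      linarith
  rw [← integral_neg]
  refine (integral_mono hWlogint.neg
    ((hW.const_mul (Real.log M - 1)).add (hNint.const_mul M⁻¹)) key).trans ?_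
  simp only [Pi.add_apply]
  rw [integral_add (hW.const_mul (Real.log M - 1)) (hNint.const_mul M⁻¹),
    integral_const_mul, integral_const_mul, hmean, hM, inv_mul_cancel₀ hM0.ne']
  linarith
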